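/- Let A and B be commutative rings. If there exists an equivalence of categories F : ModuleCat A ≌ ModuleCat B whose underlying functor is additive, then A and B are isomorphic as rings. -/

import Mathlib

open CategoryTheory

universe u

lemma center_aux {B : Type u} [CommRing B] (z : 𝟭 (ModuleCat.{u} B) ⟶ 𝟭 (ModuleCat.{u} B)) :
    ∃ b : B, ∀ M : ModuleCat.{u} B, z.app M = b • 𝟙 M := by
  refine ⟨(z.app (ModuleCat.of B B)).hom (1 : B), fun M => ?_⟩
  ext m
  have h := z.naturality (ModuleCat.ofHom (LinearMap.toSpanSingleton B M m))
  have h2 := congrArg (fun f => f.hom (1 : B)) h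
  simp at h2
  simpa using h2

lemma smul_inj_aux {B : Type u} [CommRing B] {b b' : B}
    (h : b • 𝟙 (ModuleCat.of B B) = b' • 𝟙 (ModuleCat.of B B)) : b = b' := by
  have h2 := congrArg (fun f => f.hom (1 : B)) h
  simpa using h2

lemma transport_aux {A B : Type u} [CommRing A] [CommRing B]
    (F : ModuleCat.{u} A ≌ ModuleCat.{u} B) (a : A) :
    ∃ b : B, ∀ M : ModuleCat.{u} A, F.functor.map (a • 𝟙 M) = b • 𝟙 (F.functor.obj M) := by
  obtain ⟨b, hb⟩ := center_aux (B := B)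
    { app := fun N => F.counitInv.app N ≫ F.functor.map (a • 𝟙 (F.inverse.obj N)) ≫ F.counit.app N
      naturality := by
        intro X Y f
        have h : F.inverse.map f ≫ (a • 𝟙 (F.inverse.obj Y)) =
          (a • 𝟙 (F.inverse.obj X)) ≫ F.inverse.map f := by simp
        have h2 := congrArg F.functor.map h
        simp only [Functor.map_comp] at h2
        have h3 := F.counitInv.naturality f
        have h4 := F.counit.naturality f
        simp only [Functor.id_map, Functor.comp_map, Functor.id_obj, Functor.comp_obj] at h3 h4 ⊢
        rw [reassoc_of% h3, reassoc_of% h2, h4]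
        simp only [Category.assoc] }
  refine ⟨b, fun M => ?_⟩
  rw [← hb]
  have h : a • 𝟙 M = F.unit.app M ≫ (a • 𝟙 _) ≫ F.unitInv.app M := by
    rw [Linear.smul_comp, Linear.comp_smul]; simp
  rw [h]
  simp only [Functor.map_comp, Equivalence.counitInv_app_functor]
  congr 2
  exact (F.counit_app_functor M).symm

lemma uniq_aux {A B : Type u} [CommRing A] [CommRing B]
    (F : ModuleCat.{u} A ≌ ModuleCat.{u} B) {b b' : B}
    (h : ∀ M, b • 𝟙 (F.functor.obj M) = b' • 𝟙 (F.functor.obj M)) : b = b' := by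
  apply smul_inj_aux
  have key : ∀ (N : ModuleCat.{u} B) (c : B), c • 𝟙 N =
      F.counitInv.app N ≫ (c • 𝟙 (F.functor.obj (F.inverse.obj N))) ≫ F.counit.app N := by
    intro N c
    have e : 𝟙 (F.functor.obj (F.inverse.obj N)) ≫ F.counit.app N = F.counit.app N :=
      Category.id_comp _
    rw [Linear.smul_comp, Linear.comp_smul, e]
    congr 1
    exact (F.counitIso.inv_hom_id_app N).symm
  rw [key _ b, key _ b', h]

lemma inv_aux {A B : Type u} [CommRing A] [CommRing B]
    (F : ModuleCat.{u} A ≌ ModuleCat.{u} B) {a a' : A} {b : B}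
    (h : ∀ M, F.functor.map (a • 𝟙 M) = b • 𝟙 (F.functor.obj M))
    (h' : ∀ N, F.inverse.map (b • 𝟙 N) = a' • 𝟙 (F.inverse.obj N)) : a' = a := by
  apply smul_inj_aux
  have h1 := F.unit.naturality (a • 𝟙 (ModuleCat.of A A))
  simp only [Functor.id_map, Functor.comp_map, h, h'] at h1
  have e := F.unitIso.hom_inv_id_app (ModuleCat.of A A)
  have e1 : (a • 𝟙 (ModuleCat.of A A)) ≫ F.unit.app (ModuleCat.of A A) =
      a • F.unit.app (ModuleCat.of A A) := by
    rw [Linear.smul_comp]; congr 1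
  have e2 : F.unit.app (ModuleCat.of A A) ≫
      (a' • 𝟙 (F.inverse.obj (F.functor.obj (ModuleCat.of A A)))) =
      a' • F.unit.app (ModuleCat.of A A) := by
    rw [Linear.comp_smul]; congr 1
  have h3 : a • F.unit.app (ModuleCat.of A A) = a' • F.unit.app (ModuleCat.of A A) :=
    e1.symm.trans (h1.trans e2)
  have h4 := congrArg (fun f => f ≫ F.unitInv.app (ModuleCat.of A A)) h3
  simp only [Linear.smul_comp] at h4
  have e3 : F.unit.app (ModuleCat.of A A) ≫ F.unitInv.app (ModuleCat.of A A) =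
      𝟙 (ModuleCat.of A A) := e
  rw [e3] at h4
  exact h4.symm

/-- If the categories of modules over two commutative rings `A` and `B` are equivalent via
an additive functor, then `A` and `B` are isomorphic as rings. -/
theorem stmt_4 {A B : Type u} [CommRing A] [CommRing B]
    (F : ModuleCat.{u} A ≌ ModuleCat.{u} B) [F.functor.Additive] :
    Nonempty (A ≃+* B) := by
  choose φ hφ using transport_aux F
  choose ψ hψ using transport_aux F.symm
  refine ⟨{ toFun := φ, invFun := ψ, left_inv := ?_, right_inv := ?_,
            map_mul' := ?_, map_add' := ?_ }⟩
  · intro a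
    exact inv_aux F (hφ a) (hψ (φ a))
  · intro b
    exact inv_aux F.symm (hψ b) (hφ (ψ b))
  · intro x y
    apply uniq_aux F
    intro M
    rw [← hφ]
    have h : (x * y) • 𝟙 M = (x • 𝟙 M) ≫ (y • 𝟙 M) := by
      rw [Linear.smul_comp, Linear.comp_smul, smul_smul, Category.comp_id]
    rw [h, Functor.map_comp, hφ, hφ, Linear.smul_comp, Linear.comp_smul, smul_smul,
      Category.comp_id]
  · intro x y
    apply uniq_aux F
    intro M
    rw [← hφ, add_smul, Functor.map_add, hφ, hφ, add_smul]
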